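/- Let G be a finite bipartite graph with color classes A and B, and b : V(G) → ℕ. A set Z ⊆ V(G) is a b-verifying set if and only if there exists a complementary pair of a normalized lower ideal I_A and a normalized upper ideal I_B of the poset of b-flexible components under ⪯_A (i.e., I_A and I_B are disjoint and their union is the set of all b-flexible components) such that Z = Z_A ∪ Z_B and Z_A ∩ Z_B = ∅, where Z_A = ⋃_{C ∈ I_A} (V(C) ∩ A) and Z_B = ⋃_{C ∈ I_B} (V(C) ∩ B). -/

import Mathlib

open scoped symmDiff

variable {V : Type} [Fintype V]

/-- `G` is bipartite with color classes `A` and `B`. -/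
structure Bipartition (G : SimpleGraph V) (A B : Set V) : Prop where
  disjoint : Disjoint A B
  cover : A ∪ B = Set.univ
  between : ∀ ⦃u v : V⦄, G.Adj u v → (u ∈ A ∧ v ∈ B) ∨ (u ∈ B ∧ v ∈ A)

/-- `M` is a `b`-matching of `G`: a set of edges of `G` such that each vertex `v` is
incident to at most `b v` edges of `M`. -/
def IsBMatching (G : SimpleGraph V) (b : V → ℕ) (M : Set (Sym2 V)) : Prop :=
  M ⊆ G.edgeSet ∧ ∀ v : V, {e ∈ M | v ∈ e}.ncard ≤ b v

/-- `M` is a maximum `b`-matching of `G`. -/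
def IsMaxBMatching (G : SimpleGraph V) (b : V → ℕ) (M : Set (Sym2 V)) : Prop :=
  IsBMatching G b M ∧ ∀ N : Set (Sym2 V), IsBMatching G b N → N.ncard ≤ M.ncard

/-- `E[X]`: the set of edges of `G` with both ends in `X`. -/
def edgesIn (G : SimpleGraph V) (X : Set V) : Set (Sym2 V) :=
  {e ∈ G.edgeSet | ∀ v ∈ e, v ∈ X}

/-- `b(X) = ∑_{v ∈ X} b v`. -/
noncomputable def bSum (b : V → ℕ) (X : Set V) : ℕ := ∑ᶠ v ∈ X, b v

/-- `Z` is a `b`-verifying set: `b(Zᶜ) + |E[Z]|` equals the size of a maximum `b`-matching. -/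
def IsVerifying (G : SimpleGraph V) (b : V → ℕ) (Z : Set V) : Prop :=
  ∃ M : Set (Sym2 V), IsMaxBMatching G b M ∧ bSum b Zᶜ + (edgesIn G Z).ncard = M.ncard

/-- `v` is `M`-tight. -/
def IsTight (b : V → ℕ) (M : Set (Sym2 V)) (v : V) : Prop :=
  {e ∈ M | v ∈ e}.ncard = b v

/-- `v` is `M`-loose. -/
def IsLoose (b : V → ℕ) (M : Set (Sym2 V)) (v : V) : Prop :=
  {e ∈ M | v ∈ e}.ncard < b v

/-- `M` is a perfect `b`-matching. -/
def IsPerfect (G : SimpleGraph V) (b : V → ℕ) (M : Set (Sym2 V)) : Prop :=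
  IsBMatching G b M ∧ ∀ v : V, IsTight b M v

/-- An edge is `b`-inevitable if it is an edge of `G` contained in every maximum `b`-matching. -/
def IsInevitable (G : SimpleGraph V) (b : V → ℕ) (e : Sym2 V) : Prop :=
  e ∈ G.edgeSet ∧ ∀ M : Set (Sym2 V), IsMaxBMatching G b M → e ∈ M

/-- An edge is `b`-forbidden if it is an edge of `G` contained in no maximum `b`-matching. -/
def IsForbidden (G : SimpleGraph V) (b : V → ℕ) (e : Sym2 V) : Prop :=
  e ∈ G.edgeSet ∧ ∀ M : Set (Sym2 V), IsMaxBMatching G b M → e ∉ M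

/-- An edge is `b`-flexible if some maximum `b`-matching contains it and some does not. -/
def IsFlexibleEdge (G : SimpleGraph V) (b : V → ℕ) (e : Sym2 V) : Prop :=
  (∃ M : Set (Sym2 V), IsMaxBMatching G b M ∧ e ∈ M) ∧
  (∃ M : Set (Sym2 V), IsMaxBMatching G b M ∧ e ∉ M)

/-- The spanning subgraph of `G` whose edges are the `b`-flexible edges. -/
def flexGraph (G : SimpleGraph V) (b : V → ℕ) : SimpleGraph V where
  Adj u v := IsFlexibleEdge G b s(u, v)
  symm := by
    constructor
    intro u v h
    rwa [Sym2.eq_swap] at h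
  loopless := by
    constructor
    intro v h
    obtain ⟨⟨M, hM, heM⟩, -⟩ := h
    exact G.loopless.irrefl v ((G.mem_edgeSet).mp (hM.1.1 heM))

/-- A `b`-flexible component of `G`, identified with the corresponding connected
component of the spanning subgraph of flexible edges. -/
abbrev FlexComp (G : SimpleGraph V) (b : V → ℕ) := (flexGraph G b).ConnectedComponent

/-- `D(G;b)`: the set of vertices that are `M`-loose for some maximum `b`-matching `M`. -/
def Dset (G : SimpleGraph V) (b : V → ℕ) : Set V :=
  {v | ∃ M : Set (Sym2 V), IsMaxBMatching G b M ∧ IsLoose b M v}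

/-- `c` is a `b`-loose flexible component. -/
def LooseComp (G : SimpleGraph V) (b : V → ℕ) (c : FlexComp G b) : Prop :=
  ∃ v ∈ c.supp, v ∈ Dset G b

/-- `c` is a `b`-inactive flexible component. -/
def InactiveComp (G : SimpleGraph V) (b : V → ℕ) (c : FlexComp G b) : Prop :=
  ∃ v, c.supp = {v} ∧ b v = 0

/-- `c` is a `b`-inconsistent flexible component. -/
def InconsistentComp (G : SimpleGraph V) (b : V → ℕ) (c : FlexComp G b) : Prop :=
  LooseComp G b c ∨ ∃ v, c.supp = {v} ∧ b v = 0 ∧ ∃ u ∈ Dset G b, G.Adj v u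

/-- `c` is a `b`-consistent flexible component. -/
def ConsistentComp (G : SimpleGraph V) (b : V → ℕ) (c : FlexComp G b) : Prop :=
  ¬ InconsistentComp G b c

/-- `c` is a `b`-loose flexible component hooked up by the color class `W`. -/
def LooseHooked (G : SimpleGraph V) (b : V → ℕ) (W : Set V) (c : FlexComp G b) : Prop :=
  ∃ v ∈ c.supp ∩ W, v ∈ Dset G b

/-- `c` is a `b`-inactive flexible component hooked up by the color class `W`. -/
def InactiveHooked (G : SimpleGraph V) (b : V → ℕ) (W : Set V) (c : FlexComp G b) : Prop :=
  ∃ v, c.supp = {v} ∧ b v = 0 ∧ ∃ u ∈ Dset G b ∩ W, G.Adj v u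

/-- `c` is a `b`-inconsistent flexible component hooked up by the color class `W`. -/
def HookedUp (G : SimpleGraph V) (b : V → ℕ) (W : Set V) (c : FlexComp G b) : Prop :=
  LooseHooked G b W c ∨ InactiveHooked G b W c

/-- `X` is separating: empty or a union of vertex sets of `b`-flexible components. -/
def IsSeparating (G : SimpleGraph V) (b : V → ℕ) (X : Set V) : Prop :=
  ∃ S : Set (FlexComp G b), X = ⋃ c ∈ S, c.supp

/-- The number of edges in the list `es` incident to `v` that lie in `M`. -/
noncomputable def edgeDeg (es : List (Sym2 V)) (M : Set (Sym2 V)) (v : V) : ℕ :=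
  {e : Sym2 V | e ∈ es ∧ v ∈ e ∧ e ∈ M}.ncard

/-- `p` is an `M`-wedge path from `x` to `y`. -/
def IsWedgePath {G : SimpleGraph V} (M : Set (Sym2 V)) {x y : V} (p : G.Walk x y) : Prop :=
  p.IsPath ∧ (∀ v ∈ p.support, v ≠ y → edgeDeg p.edges M v = 1) ∧ edgeDeg p.edges M y = 0

/-- `p` is an `M`-saturated path between `x` and `y`. -/
def IsSaturatedPath {G : SimpleGraph V} (M : Set (Sym2 V)) {x y : V} (p : G.Walk x y) : Prop :=
  p.IsPath ∧ ∀ v ∈ p.support, edgeDeg p.edges M v = 1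

/-- `p` is an `M`-exposed path between `x` and `y`. -/
def IsExposedPath {G : SimpleGraph V} (M : Set (Sym2 V)) {x y : V} (p : G.Walk x y) : Prop :=
  p.IsPath ∧ ∀ v ∈ p.support, edgeDeg p.edges Mᶜ v = 1

/-- `p` is an `(M; A, B)`-ascending path from `u` to `v`. -/
def IsAscending {G : SimpleGraph V} (A B : Set V) (M : Set (Sym2 V)) {u v : V}
    (p : G.Walk u v) : Prop :=
  (u ∈ A → v ∈ A → IsWedgePath M p) ∧
  (u ∈ A → v ∈ B → IsSaturatedPath M p) ∧
  (u ∈ B → v ∈ A → IsExposedPath M p) ∧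
  (u ∈ B → v ∈ B → IsWedgePath M p.reverse)

/-- The one-step relation `⊴_A` on `b`-flexible components: `c₁ ⊴_A c₂` iff `c₁ = c₂`, or
there is a `b`-inevitable edge between `V(c₁) ∩ A` and `V(c₂) ∩ B`, or a `b`-forbidden edge
between `V(c₂) ∩ A` and `V(c₁) ∩ B`. -/
def StepRel (G : SimpleGraph V) (b : V → ℕ) (A B : Set V) (c₁ c₂ : FlexComp G b) : Prop :=
  c₁ = c₂ ∨
  (∃ u ∈ c₁.supp ∩ A, ∃ v ∈ c₂.supp ∩ B, IsInevitable G b s(u, v)) ∨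
  (∃ u ∈ c₂.supp ∩ A, ∃ v ∈ c₁.supp ∩ B, IsForbidden G b s(u, v))

/-- The one-step relation `⊴_A` restricted to `b`-consistent flexible components. -/
def ConsStepRel (G : SimpleGraph V) (b : V → ℕ) (A B : Set V) (c₁ c₂ : FlexComp G b) : Prop :=
  ConsistentComp G b c₁ ∧ ConsistentComp G b c₂ ∧ StepRel G b A B c₁ c₂

/-- `I` is a lower ideal of the relation `r`. -/
def IsLowerIdeal {α : Type*} (r : α → α → Prop) (I : Set α) : Prop :=
  ∀ ⦃c d : α⦄, d ∈ I → r c d → c ∈ I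

/-- `I` is an upper ideal of the relation `r`. -/
def IsUpperIdeal {α : Type*} (r : α → α → Prop) (I : Set α) : Prop :=
  ∀ ⦃c d : α⦄, c ∈ I → r c d → d ∈ I

/-!
Counting the edges of a `b`-matching `M` by their ends outside `Z` shows that `b(Zᶜ) + |E[Z]|`
exceeds `|M|` by the total deficiency of `M` on `Zᶜ`, plus the number of edges of `E[Z]` missed by
`M`, plus the number of edges of `E[Zᶜ]` used by `M`. Hence `Z` is verifying iff
`D(G;b) ⊆ Z`, every edge of `E[Z]` is inevitable and every edge of `E[Zᶜ]` is forbidden.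

Call a vertex low if it lies in `A ∩ Z` or in `B \ Z`. A flexible edge has exactly one end in `Z`,
so its ends are both low or both not low, and the low vertices are those of a set `I` of
flexible components. An edge between two distinct components is inevitable or forbidden, and in
terms of `I` the two edge conditions on `Z` say exactly that `I` is closed downwards under `⊴_A`;
the condition on `D(G;b)` says that `I` is normalized as far as loose components are concerned. For
inactive components this follows, since all edges at a vertex with `b v = 0` are forbidden.
-/

section DoubleCounting

open Finset

open Classical in
theorem card_filter_mem_sym2_add {α : Type*} (X : Finset α) {e : Sym2 α} (he : ¬ e.IsDiag) :
    #{v ∈ X | v ∈ e} + (if ∀ v ∈ e, v ∉ X then 1 else 0) =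
      1 + if ∀ v ∈ e, v ∈ X then 1 else 0 := by
  induction e with
  | _ u v =>
    have huv : u ≠ v := by simpa only [Sym2.mk_isDiag_iff] using he
    have hends : {w ∈ X | w ∈ s(u, v)} = X ∩ {u, v} := by
      ext w
      simp only [mem_filter, mem_inter, Sym2.mem_iff, mem_insert, mem_singleton]
    rw [hends]
    by_cases hu : u ∈ X <;> by_cases hv : v ∈ X <;> simp [hu, hv, huv]

open Classical in
theorem sum_card_filter_mem_sym2_add {α : Type*} (X : Finset α)
    {M : Finset (Sym2 α)} (hM : ∀ e ∈ M, ¬ e.IsDiag) :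
    ∑ v ∈ X, #{e ∈ M | v ∈ e} + #{e ∈ M | ∀ v ∈ e, v ∉ X} =
      #M + #{e ∈ M | ∀ v ∈ e, v ∈ X} := by
  have hswap : ∑ v ∈ X, #{e ∈ M | v ∈ e} = ∑ e ∈ M, #{v ∈ X | v ∈ e} :=
    sum_card_bipartiteAbove_eq_sum_card_bipartiteBelow (· ∈ ·)
  rw [hswap, card_filter, card_filter, card_eq_sum_ones, ← sum_add_distrib, ← sum_add_distrib]
  exact sum_congr rfl fun e he => card_filter_mem_sym2_add X (hM e he)

end DoubleCounting

section IdealsOfRelations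

variable {α : Type*} {r : α → α → Prop} {I : Set α}

theorem isLowerIdeal_reflTransGen_iff :
    IsLowerIdeal (Relation.ReflTransGen r) I ↔ IsLowerIdeal r I :=
  ⟨fun h _ _ hd hcd => h hd (.single hcd),
    fun h _ _ hd hcd => hcd.head_induction_on hd fun hab _ hb => h hb hab⟩

theorem IsLowerIdeal.isUpperIdeal_compl (h : IsLowerIdeal r I) : IsUpperIdeal r Iᶜ :=
  fun _ _ hc hcd hd => hc (h hd hcd)

end IdealsOfRelations

theorem exists_eq_preimage_connectedComponentMk {α : Type*} {H : SimpleGraph α} {S : Set α}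
    (hS : ∀ ⦃u v⦄, H.Adj u v → u ∈ S → v ∈ S) :
    ∃ I : Set H.ConnectedComponent, S = H.connectedComponentMk ⁻¹' I := by
  refine ⟨H.connectedComponentMk '' S, (Set.subset_preimage_image _ _).antisymm ?_⟩
  rintro v ⟨u, hu, huv⟩
  obtain ⟨p⟩ := SimpleGraph.ConnectedComponent.exact huv
  clear huv
  induction p with
  | nil => exact hu
  | cons hadj _ ih => exact ih (hS hadj hu)

section DualityGap

variable {α : Type} {G : SimpleGraph α} {b : α → ℕ} {M : Set (Sym2 α)} {X Z : Set α}

theorem mk_mem_edgesIn {u v : α} : s(u, v) ∈ edgesIn G X ↔ G.Adj u v ∧ u ∈ X ∧ v ∈ X := by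
  simp [edgesIn]

variable [Finite α]

theorem finsum_compl_ncard_incident_add (hM : M ⊆ G.edgeSet) (Z : Set α) :
    ∑ᶠ v ∈ Zᶜ, {e ∈ M | v ∈ e}.ncard + (M ∩ edgesIn G Z).ncard =
      M.ncard + (M ∩ edgesIn G Zᶜ).ncard := by
  classical
  have := Fintype.ofFinite α
  have hedges (X : Set α) : M ∩ edgesIn G X = {e ∈ M | ∀ v ∈ e, v ∈ X} := by
    ext e
    exact ⟨fun h => ⟨h.1, h.2.2⟩, fun h => ⟨h.1, hM h.1, h.2⟩⟩
  have hcount := sum_card_filter_mem_sym2_add Zᶜ.toFinset (M := M.toFinset)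
    fun e he => G.not_isDiag_of_mem_edgeSet (hM (Set.mem_toFinset.1 he))
  simp only [Set.mem_toFinset, Set.mem_compl_iff, not_not] at hcount
  rw [finsum_mem_eq_toFinset_sum]
  simpa only [hedges, Set.mem_compl_iff, Set.ncard_eq_toFinset_card',
    Set.toFinset_ofPred, Finset.filter_and, Set.filter_mem_univ_eq_toFinset,
    Finset.inter_filter, Finset.inter_univ] using hcount

theorem IsBMatching.bSum_compl_add_ncard_edgesIn (hM : IsBMatching G b M) (Z : Set α) :
    bSum b Zᶜ + (edgesIn G Z).ncard = M.ncard +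
      (∑ᶠ v ∈ Zᶜ, (b v - {e ∈ M | v ∈ e}.ncard) + (edgesIn G Z \ M).ncard +
        (M ∩ edgesIn G Zᶜ).ncard) := by
  have hsum : bSum b Zᶜ =
      ∑ᶠ v ∈ Zᶜ, {e ∈ M | v ∈ e}.ncard + ∑ᶠ v ∈ Zᶜ, (b v - {e ∈ M | v ∈ e}.ncard) := by
    rw [← finsum_mem_add_distrib (Set.toFinite _)]
    exact finsum_mem_congr rfl fun v _ => (Nat.add_sub_of_le (hM.2 v)).symm
  have hsplit := Set.ncard_inter_add_ncard_sdiff_eq_ncard (edgesIn G Z) M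
  rw [Set.inter_comm] at hsplit
  have hcount := finsum_compl_ncard_incident_add hM.1 Z
  omega

theorem IsBMatching.bSum_compl_add_ncard_edgesIn_eq_iff (hM : IsBMatching G b M) :
    bSum b Zᶜ + (edgesIn G Z).ncard = M.ncard ↔
      (∀ v ∉ Z, ¬ IsLoose b M v) ∧ edgesIn G Z ⊆ M ∧ Disjoint M (edgesIn G Zᶜ) := by
  have hdeficiency : ∑ᶠ v ∈ Zᶜ, (b v - {e ∈ M | v ∈ e}.ncard) = 0 ↔ ∀ v ∉ Z, ¬ IsLoose b M v := by
    rw [finsum_mem_eq_finite_toFinset_sum _ (Set.toFinite _), Finset.sum_eq_zero_iff]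
    simp only [Set.Finite.mem_toFinset, Set.mem_compl_iff, Nat.sub_eq_zero_iff_le, IsLoose, not_lt]
  rw [hM.bSum_compl_add_ncard_edgesIn, Nat.add_eq_left, Nat.add_eq_zero_iff, Nat.add_eq_zero_iff,
    hdeficiency, Set.ncard_eq_zero, Set.ncard_eq_zero, Set.sdiff_eq_empty,
    ← Set.disjoint_iff_inter_eq_empty, and_assoc]

end DualityGap

section ComplementarySlackness

variable {α : Type} {G : SimpleGraph α} {b : α → ℕ} {Z : Set α}

theorem exists_isMaxBMatching [Finite α] (G : SimpleGraph α) (b : α → ℕ) :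
    ∃ M, IsMaxBMatching G b M := by
  obtain ⟨M, hM, hmax⟩ := Set.exists_max_image {M : Set (Sym2 α) | IsBMatching G b M}
    Set.ncard (Set.toFinite _) ⟨∅, by simp [IsBMatching]⟩
  exact ⟨M, hM, hmax⟩

/-- The complementary slackness conditions on `Z`: no maximum `b`-matching is loose at a vertex
outside `Z`, misses an edge of `E[Z]` or uses an edge of `E[Zᶜ]`. -/
structure HasComplementarySlackness (G : SimpleGraph α) (b : α → ℕ) (Z : Set α) : Prop where
  Dset_subset : Dset G b ⊆ Z
  inevitable : ∀ e ∈ edgesIn G Z, IsInevitable G b e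
  forbidden : ∀ e ∈ edgesIn G Zᶜ, IsForbidden G b e

theorem isVerifying_iff_hasComplementarySlackness [Finite α] :
    IsVerifying G b Z ↔ HasComplementarySlackness G b Z := by
  constructor
  · rintro ⟨M, hM, hMZ⟩
    have hslack (N : Set (Sym2 α)) (hN : IsMaxBMatching G b N) :=
      hN.1.bSum_compl_add_ncard_edgesIn_eq_iff.1
        (hMZ.trans (le_antisymm (hN.2 M hM.1) (hM.2 N hN.1)))
    refine ⟨?_, fun e he => ⟨he.1, fun N hN => (hslack N hN).2.1 he⟩,
      fun e he => ⟨he.1, fun N hN heN => (hslack N hN).2.2.notMem_of_mem_left heN he⟩⟩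
    rintro v ⟨N, hN, hloose⟩
    exact by_contra fun hv => (hslack N hN).1 v hv hloose
  · intro h
    obtain ⟨M, hM⟩ := exists_isMaxBMatching G b
    exact ⟨M, hM, hM.1.bSum_compl_add_ncard_edgesIn_eq_iff.2
      ⟨fun v hv hloose => hv (h.Dset_subset ⟨M, hM, hloose⟩),
        fun e he => (h.inevitable e he).2 M hM,
        Set.disjoint_left.2 fun e heM he => (h.forbidden e he).2 M hM heM⟩⟩

end ComplementarySlackness

section EdgeTypes

variable {α : Type} {G : SimpleGraph α} {b : α → ℕ} {e : Sym2 α} {u v : α}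

theorem IsFlexibleEdge.mem_edgeSet (he : IsFlexibleEdge G b e) : e ∈ G.edgeSet :=
  let ⟨⟨_, hM, heM⟩, _⟩ := he
  hM.1.1 heM

theorem IsFlexibleEdge.not_isInevitable (he : IsFlexibleEdge G b e) : ¬ IsInevitable G b e :=
  fun h => let ⟨M, hM, heM⟩ := he.2; heM (h.2 M hM)

theorem IsFlexibleEdge.not_isForbidden (he : IsFlexibleEdge G b e) : ¬ IsForbidden G b e :=
  fun h => let ⟨M, hM, heM⟩ := he.1; h.2 M hM heM

theorem IsFlexibleEdge.of_not_isInevitable_of_not_isForbidden (he : e ∈ G.edgeSet)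
    (hi : ¬ IsInevitable G b e) (hf : ¬ IsForbidden G b e) : IsFlexibleEdge G b e := by
  simp only [IsInevitable, IsForbidden, he, true_and, not_forall, not_not, exists_prop] at hi hf
  exact ⟨hf, hi⟩

variable [Finite α]

theorem IsInevitable.not_isForbidden (hi : IsInevitable G b e) : ¬ IsForbidden G b e := fun hf =>
  let ⟨M, hM⟩ := exists_isMaxBMatching G b
  hf.2 M hM (hi.2 M hM)

theorem isForbidden_of_mem_of_eq_zero (he : e ∈ G.edgeSet) (hve : v ∈ e) (hv : b v = 0) :
    IsForbidden G b e := by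
  refine ⟨he, fun M hM heM => ?_⟩
  have hpos : 0 < {e ∈ M | v ∈ e}.ncard := (Set.ncard_pos (Set.toFinite _)).2 ⟨e, heM, hve⟩
  exact (hpos.trans_le (hM.1.2 v)).ne' hv

theorem isInevitable_iff_not_isForbidden_of_component_ne (huv : G.Adj u v)
    (hne : (flexGraph G b).connectedComponentMk u ≠ (flexGraph G b).connectedComponentMk v) :
    IsInevitable G b s(u, v) ↔ ¬ IsForbidden G b s(u, v) := by
  refine ⟨IsInevitable.not_isForbidden, fun hf => by_contra fun hi => hne ?_⟩
  have hadj : (flexGraph G b).Adj u v := .of_not_isInevitable_of_not_isForbidden huv hi hf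
  exact SimpleGraph.ConnectedComponent.sound hadj.reachable

end EdgeTypes

section Bipartition

variable {α : Type} {G : SimpleGraph α} {A B : Set α}

theorem Bipartition.mem_right_iff (hG : Bipartition G A B) {v : α} : v ∈ B ↔ v ∉ A := by
  rw [← (IsCompl.of_eq hG.disjoint.eq_bot hG.cover).compl_eq, Set.mem_compl_iff]

theorem Bipartition.mem_left_iff_notMem_of_adj (hG : Bipartition G A B) {u v : α}
    (huv : G.Adj u v) : u ∈ A ↔ v ∉ A := by
  have := hG.between huv
  simp only [hG.mem_right_iff] at this
  tauto

theorem Bipartition.forall_mem_edgesIn_iff (hG : Bipartition G A B) {X : Set α}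
    {P : Sym2 α → Prop} :
    (∀ e ∈ edgesIn G X, P e) ↔
      ∀ u ∈ A, ∀ v ∈ B, G.Adj u v → u ∈ X → v ∈ X → P s(u, v) := by
  refine ⟨fun h u _ v _ huv hu hv => h _ (mk_mem_edgesIn.2 ⟨huv, hu, hv⟩), fun h e he => ?_⟩
  induction e with
  | _ u v =>
    obtain ⟨huv, hu, hv⟩ := mk_mem_edgesIn.1 he
    obtain ⟨huA, hvB⟩ | ⟨huB, hvA⟩ := hG.between huv
    · exact h u huA v hvB huv hu hv
    · exact Sym2.eq_swap ▸ h v hvA u huB huv.symm hv hu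

end Bipartition

section IdealVerts

variable {α : Type} {G H : SimpleGraph α} {b : α → ℕ} {A B Z : Set α}

/-- The vertices of `A` in the components of `I` together with the vertices outside `A` in the
components not in `I`; when `A` and `B` are the color classes, this is `Z_A ∪ Z_B` for
`I_A = I` and `I_B = Iᶜ`. -/
def idealVerts (A : Set α) (I : Set H.ConnectedComponent) : Set α :=
  {v | v ∈ A ↔ H.connectedComponentMk v ∈ I}

theorem Bipartition.idealVerts_eq (hG : Bipartition G A B) (I : Set H.ConnectedComponent) :
    idealVerts A I = (⋃ c ∈ I, c.supp ∩ A) ∪ ⋃ c ∈ Iᶜ, c.supp ∩ B := by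
  ext v
  simp only [idealVerts, Set.mem_ofPred_eq, Set.mem_union, Set.mem_iUnion, Set.mem_inter_iff,
    SimpleGraph.ConnectedComponent.mem_supp_iff, exists_prop, Set.mem_compl_iff, hG.mem_right_iff]
  grind

theorem HasComplementarySlackness.mem_iff_notMem_of_isFlexibleEdge
    (h : HasComplementarySlackness G b Z) {u v : α} (huv : IsFlexibleEdge G b s(u, v)) :
    u ∈ Z ↔ v ∉ Z := by
  have hin : ¬ (u ∈ Z ∧ v ∈ Z) := fun hZ =>
    huv.not_isInevitable (h.inevitable _ (mk_mem_edgesIn.2 ⟨huv.mem_edgeSet, hZ⟩))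
  have hout : ¬ (u ∉ Z ∧ v ∉ Z) := fun hZ =>
    huv.not_isForbidden (h.forbidden _ (mk_mem_edgesIn.2 ⟨huv.mem_edgeSet, hZ⟩))
  tauto

theorem HasComplementarySlackness.exists_eq_idealVerts (hG : Bipartition G A B)
    (h : HasComplementarySlackness G b Z) : ∃ I : Set (FlexComp G b), Z = idealVerts A I := by
  obtain ⟨I, hI⟩ := exists_eq_preimage_connectedComponentMk (H := flexGraph G b)
    (S := {v | v ∈ A ↔ v ∈ Z}) fun u v huv hu => by
      have hA := hG.mem_left_iff_notMem_of_adj huv.mem_edgeSet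
      have hZ := h.mem_iff_notMem_of_isFlexibleEdge huv
      simp only [Set.mem_ofPred_eq] at hu ⊢
      tauto
  refine ⟨I, Set.ext fun v => ?_⟩
  have hv : (v ∈ A ↔ v ∈ Z) ↔ (flexGraph G b).connectedComponentMk v ∈ I := Set.ext_iff.1 hI v
  simp only [idealVerts, Set.mem_ofPred_eq]
  tauto

end IdealVerts

section Ideals

variable {α : Type} {G : SimpleGraph α} {b : α → ℕ} {A B : Set α} {I : Set (FlexComp G b)}

theorem isLowerIdeal_stepRel_iff :
    IsLowerIdeal (StepRel G b A B) I ↔ ∀ u ∈ A, ∀ v ∈ B,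
      (IsInevitable G b s(u, v) → (flexGraph G b).connectedComponentMk v ∈ I →
        (flexGraph G b).connectedComponentMk u ∈ I) ∧
      (IsForbidden G b s(u, v) → (flexGraph G b).connectedComponentMk u ∈ I →
        (flexGraph G b).connectedComponentMk v ∈ I) := by
  constructor
  · exact fun h u hu v hv =>
      ⟨fun hi hvI => h hvI (.inr (.inl ⟨u, ⟨rfl, hu⟩, v, ⟨rfl, hv⟩, hi⟩)),
        fun hf huI => h huI (.inr (.inr ⟨u, ⟨rfl, hu⟩, v, ⟨rfl, hv⟩, hf⟩))⟩
  · rintro h c d hd (rfl | ⟨u, ⟨rfl, hu⟩, v, ⟨rfl, hv⟩, hi⟩ | ⟨u, ⟨rfl, hu⟩, v, ⟨rfl, hv⟩, hf⟩)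
    · exact hd
    · exact (h u hu v hv).1 hi hd
    · exact (h u hu v hv).2 hf hd

theorem forall_looseHooked_iff {W : Set α} {P : FlexComp G b → Prop} :
    (∀ c, LooseHooked G b W c → P c) ↔
      ∀ v ∈ Dset G b, v ∈ W → P ((flexGraph G b).connectedComponentMk v) :=
  ⟨fun h v hvD hvW => h _ ⟨v, ⟨rfl, hvW⟩, hvD⟩, by
    rintro h _ ⟨v, ⟨rfl, hvW⟩, hvD⟩
    exact h v hvD hvW⟩

/-- A normalized lower ideal of the flexible components under `⪯_A`. -/
structure IsNormalizedLowerIdeal (G : SimpleGraph α) (b : α → ℕ) (A B : Set α)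
    (I : Set (FlexComp G b)) : Prop where
  isLowerIdeal : IsLowerIdeal (Relation.ReflTransGen (StepRel G b A B)) I
  mem_of_hookedUp : ∀ c, HookedUp G b A c → c ∈ I
  notMem_of_hookedUp : ∀ c, HookedUp G b B c → c ∉ I

theorem Bipartition.Dset_subset_idealVerts_iff (hG : Bipartition G A B) :
    Dset G b ⊆ idealVerts A I ↔
      (∀ c, LooseHooked G b A c → c ∈ I) ∧ ∀ c, LooseHooked G b B c → c ∉ I := by
  simp only [forall_looseHooked_iff, ← forall_and, Set.subset_def, idealVerts, Set.mem_ofPred_eq,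
    hG.mem_right_iff]
  exact forall₂_congr fun v _ => by tauto

variable [Finite α]

theorem Bipartition.forall_mem_edgesIn_idealVerts_iff_isLowerIdeal (hG : Bipartition G A B) :
    ((∀ e ∈ edgesIn G (idealVerts A I), IsInevitable G b e) ∧
      ∀ e ∈ edgesIn G (idealVerts A I)ᶜ, IsForbidden G b e) ↔
    IsLowerIdeal (StepRel G b A B) I := by
  rw [hG.forall_mem_edgesIn_iff, hG.forall_mem_edgesIn_iff, isLowerIdeal_stepRel_iff]
  simp only [← forall_and]
  refine forall₄_congr fun u hu v hv => ?_
  have hvA : v ∉ A := hG.mem_right_iff.1 hv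
  simp only [Set.mem_compl_iff, idealVerts, Set.mem_ofPred_eq, hu, hvA, true_iff, false_iff,
    not_not]
  by_cases huv : G.Adj u v
  · have hne (h : ¬ ((flexGraph G b).connectedComponentMk u ∈ I ↔
        (flexGraph G b).connectedComponentMk v ∈ I)) :
        IsInevitable G b s(u, v) ↔ ¬ IsForbidden G b s(u, v) :=
      isInevitable_iff_not_isForbidden_of_component_ne huv fun huv' => h (by rw [huv'])
    tauto
  · exact iff_of_true (fun h => absurd h huv)
      ⟨fun hi => absurd hi.1 huv, fun hf => absurd hf.1 huv⟩

theorem Bipartition.mem_of_inactiveHooked (hG : Bipartition G A B)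
    (hI : IsLowerIdeal (StepRel G b A B) I) (hA : ∀ c, LooseHooked G b A c → c ∈ I)
    {c : FlexComp G b} (hc : InactiveHooked G b A c) : c ∈ I := by
  obtain ⟨v, hcv, hv, u, ⟨huD, huA⟩, hvu⟩ := hc
  obtain rfl : (flexGraph G b).connectedComponentMk v = c := hcv.ge rfl
  have hvB : v ∈ B := hG.mem_right_iff.2 ((hG.mem_left_iff_notMem_of_adj hvu.symm).1 huA)
  exact (isLowerIdeal_stepRel_iff.1 hI u huA v hvB).2
    (isForbidden_of_mem_of_eq_zero hvu.symm (Sym2.mem_mk_right u v) hv)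
    (forall_looseHooked_iff.1 hA u huD huA)

theorem Bipartition.notMem_of_inactiveHooked (hG : Bipartition G A B)
    (hI : IsLowerIdeal (StepRel G b A B) I) (hB : ∀ c, LooseHooked G b B c → c ∉ I)
    {c : FlexComp G b} (hc : InactiveHooked G b B c) : c ∉ I := by
  obtain ⟨v, hcv, hv, u, ⟨huD, huB⟩, hvu⟩ := hc
  obtain rfl : (flexGraph G b).connectedComponentMk v = c := hcv.ge rfl
  have hvA : v ∈ A := (hG.mem_left_iff_notMem_of_adj hvu).2 (hG.mem_right_iff.1 huB)
  exact fun hvI => forall_looseHooked_iff.1 hB u huD huB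
    ((isLowerIdeal_stepRel_iff.1 hI v hvA u huB).2
      (isForbidden_of_mem_of_eq_zero hvu (Sym2.mem_mk_left v u) hv) hvI)

theorem Bipartition.isNormalizedLowerIdeal_iff (hG : Bipartition G A B) :
    IsNormalizedLowerIdeal G b A B I ↔ IsLowerIdeal (StepRel G b A B) I ∧
      (∀ c, LooseHooked G b A c → c ∈ I) ∧ ∀ c, LooseHooked G b B c → c ∉ I := by
  constructor
  · exact fun h => ⟨isLowerIdeal_reflTransGen_iff.1 h.isLowerIdeal,
      fun c hc => h.mem_of_hookedUp c (.inl hc), fun c hc => h.notMem_of_hookedUp c (.inl hc)⟩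
  · exact fun ⟨hI, hA, hB⟩ => ⟨isLowerIdeal_reflTransGen_iff.2 hI,
      fun c hc => hc.elim (hA c) (hG.mem_of_inactiveHooked hI hA),
      fun c hc => hc.elim (hB c) (hG.notMem_of_inactiveHooked hI hB)⟩

theorem Bipartition.hasComplementarySlackness_idealVerts_iff (hG : Bipartition G A B) :
    HasComplementarySlackness G b (idealVerts A I) ↔ IsNormalizedLowerIdeal G b A B I := by
  rw [hG.isNormalizedLowerIdeal_iff, ← hG.Dset_subset_idealVerts_iff,
    ← hG.forall_mem_edgesIn_idealVerts_iff_isLowerIdeal]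
  exact ⟨fun h => ⟨⟨h.inevitable, h.forbidden⟩, h.Dset_subset⟩,
    fun ⟨⟨hi, hf⟩, hD⟩ => ⟨hD, hi, hf⟩⟩

end Ideals

/-- `Z` is a `b`-verifying set iff there is a complementary pair of a normalized lower
ideal `I_A` and a normalized upper ideal `I_B` of the poset of `b`-flexible components
under `⪯_A` with `Z = Z_A ∪ Z_B` (disjointly), where `Z_A = ⋃_{C ∈ I_A} V(C) ∩ A` and
`Z_B = ⋃_{C ∈ I_B} V(C) ∩ B`. -/
theorem stmt_18 (G : SimpleGraph V) (A B : Set V) (hG : Bipartition G A B) (b : V → ℕ)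
    (Z : Set V) :
    IsVerifying G b Z ↔
      ∃ IA IB : Set (FlexComp G b),
        IsLowerIdeal (Relation.ReflTransGen (StepRel G b A B)) IA ∧
        IsUpperIdeal (Relation.ReflTransGen (StepRel G b A B)) IB ∧
        (∀ c : FlexComp G b, HookedUp G b A c → c ∈ IA) ∧
        (∀ c : FlexComp G b, HookedUp G b B c → c ∉ IA) ∧
        (∀ c : FlexComp G b, HookedUp G b B c → c ∈ IB) ∧
        (∀ c : FlexComp G b, HookedUp G b A c → c ∉ IB) ∧
        Disjoint IA IB ∧ IA ∪ IB = Set.univ ∧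
        Disjoint (⋃ c ∈ IA, c.supp ∩ A) (⋃ c ∈ IB, c.supp ∩ B) ∧
        Z = (⋃ c ∈ IA, c.supp ∩ A) ∪ (⋃ c ∈ IB, c.supp ∩ B) := by
  rw [isVerifying_iff_hasComplementarySlackness]
  constructor
  · intro hZ
    obtain ⟨I, rfl⟩ := hZ.exists_eq_idealVerts hG
    obtain ⟨hlow, hA, hB⟩ := hG.hasComplementarySlackness_idealVerts_iff.1 hZ
    refine ⟨I, Iᶜ, hlow, hlow.isUpperIdeal_compl, hA, hB, hB, fun c hc hcI => hcI (hA c hc),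
      disjoint_compl_right, Set.union_compl_self I, ?_, hG.idealVerts_eq I⟩
    exact hG.disjoint.mono (Set.iUnion₂_subset fun _ _ => Set.inter_subset_right)
      (Set.iUnion₂_subset fun _ _ => Set.inter_subset_right)
  · rintro ⟨I, J, hlow, -, hA, hB, -, -, hdisj, hunion, -, rfl⟩
    obtain rfl : Iᶜ = J := (IsCompl.of_eq hdisj.eq_bot hunion).compl_eq
    rw [← hG.idealVerts_eq I]
    exact hG.hasComplementarySlackness_idealVerts_iff.2 ⟨hlow, hA, hB⟩
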